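/- Let b₁ be a nondegenerate symmetric bilinear form on sl(3,ℝ) satisfying b₁([A,X],Y) + b₁(X,[A,Y]) = 0 for all A, X, Y ∈ sl(3,ℝ), and let b₂ be a nondegenerate symmetric bilinear form on ℝ³ ⊕ (ℝ³)* satisfying b₂(A·u, w) + b₂(u, A·w) = 0 for all A ∈ sl(3,ℝ) and all u, w. Then there exist nonzero real numbers c₁, c₂ such that for all A, A′ ∈ sl(3,ℝ), v, v′ ∈ ℝ³ and q, q′ ∈ (ℝ³)*: c₁·b₁(A,A′) + c₂·b₂((v,q),(v′,q′)) = κ₄(j(A) + X_v + Y_q, j(A′) + X_{v′} + Y_{q′}), where κ₄ is the Killing form of sl(4,ℝ). -/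

import Mathlib

open Matrix

abbrev M33R := Matrix (Fin 3) (Fin 3) ℝ

/-- The block embedding `A ↦ [[A,0],[0,0]]` of 3×3 matrices into 4×4 matrices. -/
def jmat (A : M33R) : Matrix (Fin 4) (Fin 4) ℝ :=
  (Matrix.fromBlocks A 0 0 (0 : Matrix (Fin 1) (Fin 1) ℝ)).submatrix
    ⇑(@finSumFinEquiv 3 1).symm ⇑(@finSumFinEquiv 3 1).symm

/-- For `v ∈ ℝ³`, the matrix `X_v ∈ sl(4,ℝ)` with `(i,4)` entry `v i` and zeros elsewhere. -/
def XmatAux (v : Fin 3 → ℝ) : Matrix (Fin 4) (Fin 4) ℝ :=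
  (Matrix.fromBlocks 0 (Matrix.of fun i (_ : Fin 1) => v i) 0 0).submatrix
    ⇑(@finSumFinEquiv 3 1).symm ⇑(@finSumFinEquiv 3 1).symm

/-- For `q ∈ (ℝ³)*`, the matrix `Y_q ∈ sl(4,ℝ)` with `(4,j)` entry `q (e j)`. -/
def YmatAux (q : Module.Dual ℝ (Fin 3 → ℝ)) : Matrix (Fin 4) (Fin 4) ℝ :=
  (Matrix.fromBlocks 0 0 (Matrix.of fun (_ : Fin 1) j => q (Pi.single j 1)) 0).submatrix
    ⇑(@finSumFinEquiv 3 1).symm ⇑(@finSumFinEquiv 3 1).symm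

lemma trace_submatrix_finSumFinEquiv (M : Matrix (Fin 3 ⊕ Fin 1) (Fin 3 ⊕ Fin 1) ℝ) :
    (M.submatrix ⇑(@finSumFinEquiv 3 1).symm ⇑(@finSumFinEquiv 3 1).symm).trace = M.trace := by
  unfold Matrix.trace Matrix.diag
  exact Fintype.sum_equiv finSumFinEquiv.symm _ _ (fun i => rfl)

lemma trace_fromBlocks' (A : Matrix (Fin 3) (Fin 3) ℝ) (B : Matrix (Fin 3) (Fin 1) ℝ)
    (C : Matrix (Fin 1) (Fin 3) ℝ) (D : Matrix (Fin 1) (Fin 1) ℝ) :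
    (Matrix.fromBlocks A B C D).trace = A.trace + D.trace := by
  unfold Matrix.trace Matrix.diag
  simp [Fintype.sum_sum_type, Matrix.fromBlocks]

/-- `j : sl(3,ℝ) → sl(4,ℝ)`. -/
def jsl (A : LieAlgebra.SpecialLinear.sl (Fin 3) ℝ) : LieAlgebra.SpecialLinear.sl (Fin 4) ℝ :=
  ⟨jmat A.1, by
    have hA : Matrix.trace (A.1) = 0 := A.2
    show Matrix.trace (jmat A.1) = 0
    rw [jmat, trace_submatrix_finSumFinEquiv, trace_fromBlocks', hA]
    simp⟩

/-- `X_v` as an element of `sl(4,ℝ)`. -/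
def Xsl (v : Fin 3 → ℝ) : LieAlgebra.SpecialLinear.sl (Fin 4) ℝ :=
  ⟨XmatAux v, by
    show Matrix.trace (XmatAux v) = 0
    rw [XmatAux, trace_submatrix_finSumFinEquiv, trace_fromBlocks']
    simp⟩

/-- `Y_q` as an element of `sl(4,ℝ)`. -/
def Ysl (q : Module.Dual ℝ (Fin 3 → ℝ)) : LieAlgebra.SpecialLinear.sl (Fin 4) ℝ :=
  ⟨YmatAux q, by
    show Matrix.trace (YmatAux q) = 0
    rw [YmatAux, trace_submatrix_finSumFinEquiv, trace_fromBlocks']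
    simp⟩

/-- The module `ℝ³ ⊕ (ℝ³)*`. -/
abbrev Vmod : Type := (Fin 3 → ℝ) × Module.Dual ℝ (Fin 3 → ℝ)

/-- The standard `sl(3,ℝ)`-module structure on `ℝ³ ⊕ (ℝ³)*`:
`A · (p, q) = (A p, −q ∘ A)`. -/
def slAct (A : M33R) (v : Vmod) : Vmod :=
  (A.mulVec v.1, -(v.2 ∘ₗ A.mulVecLin))

/-!
The Killing form of `sl n` is `2n` times `tr (X * Y)`, and the trace form of block matrices
`[[A, v], [q, 0]]` splits as `tr (A * A') + (q' v + q v')`. So it suffices that each of the two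
given forms is a multiple of the corresponding summand.

* On `sl n`, the element `H = E_ii - E_jj` acts on `E_ij` by `2`, and its weight is `-2` on `E_ji`
  only; an invariant form `Φ` therefore pairs `E_ij` only with `E_ji`. After subtracting a multiple
  of the trace form from `Φ`, the element `E_ij` lies in the kernel, which is an ideal, and an ideal
  containing `E_ij` is everything.
* On `V ⊕ V*`, symmetry and invariance give `Φ (A x) x = 0`; since `sl n` is transitive on nonzero
  vectors and on nonzero covectors, `Φ` vanishes on `V` and on `V*`. The pairing between `V` and
  `V*` is an endomorphism of `V` commuting with `sl n`, hence a scalar.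
-/

section

attribute [local instance] LieRing.ofAssociativeRing

open LieAlgebra LieAlgebra.SpecialLinear LieModule Module

lemma trace_mulLeftRight_matrix {R n : Type*} [CommRing R] [Fintype n]
    (A B : Matrix n n R) :
    LinearMap.trace R _ (LinearMap.mulLeftRight R (A, B)) = A.trace * B.trace := by
  classical
  have entry (i j : n) : (A * Matrix.single i j (1 : R) * B) i j = A i i * B j j := by
    simp [Matrix.mul_apply, Matrix.single_apply, ite_and]
  simp only [LinearMap.trace_eq_matrix_trace R (Matrix.stdBasis R n n), Matrix.trace,
    Fintype.sum_prod_type, Matrix.diag_apply, LinearMap.toMatrix_apply, Matrix.stdBasis_eq_single,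
    LinearMap.mulLeftRight_apply, Finset.sum_mul_sum]
  exact Finset.sum_congr rfl fun i _ ↦ Finset.sum_congr rfl fun j _ ↦ entry i j

variable {R K n : Type*} [CommRing R] [Field K] [Fintype n] [DecidableEq n]

lemma killingForm_matrix_apply (X Y : Matrix n n R) :
    killingForm R (Matrix n n R) X Y =
      2 * Fintype.card n * (X * Y).trace - 2 * X.trace * Y.trace := by
  have ad_comp_ad : ad R (Matrix n n R) X ∘ₗ ad R (Matrix n n R) Y =
      LinearMap.mulLeftRight R (X * Y, 1) - LinearMap.mulLeftRight R (X, Y)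
        - LinearMap.mulLeftRight R (Y, X) + LinearMap.mulLeftRight R (1, Y * X) := by
    refine LinearMap.ext fun Z ↦ ?_
    simp only [LinearMap.comp_apply, ad_apply, Ring.lie_def, LinearMap.add_apply,
      LinearMap.sub_apply, LinearMap.mulLeftRight_apply]
    noncomm_ring
  simp only [killingForm_apply_apply, ad_comp_ad, map_add, map_sub, trace_mulLeftRight_matrix,
    Matrix.trace_one, Matrix.trace_mul_comm Y X]
  ring

lemma trace_coe_sl (A : sl n R) : A.1.trace = 0 := A.2

lemma killingForm_sl_apply [IsDomain R] [IsPrincipalIdealRing R] (X Y : sl n R) :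
    killingForm R (sl n R) X Y = 2 * Fintype.card n * (X.1 * Y.1).trace := by
  have lie_mem (Z : Matrix n n R) : ⁅X.1, ⁅Y.1, Z⁆⁆ ∈ (sl n R).toSubmodule :=
    matrix_trace_commutator_zero n R X.1 ⁅Y.1, Z⁆
  calc killingForm R (sl n R) X Y = killingForm R (Matrix n n R) X.1 Y.1 :=
        LinearMap.trace_restrict_eq_of_forall_mem (sl n R).toSubmodule
          (ad R (Matrix n n R) X.1 ∘ₗ ad R (Matrix n n R) Y.1) lie_mem
    _ = 2 * Fintype.card n * (X.1 * Y.1).trace := by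
        rw [killingForm_matrix_apply, trace_coe_sl, mul_zero, zero_mul, sub_zero]

lemma traceForm_sl_apply (X Y : sl n R) :
    traceForm R (sl n R) (n → R) X Y = (X.1 * Y.1).trace := by
  rw [traceForm_apply_apply, ← Matrix.trace_toLin'_eq, Matrix.toLin'_mul]
  rfl

section InvariantForm

variable {L M : Type*} [LieRing L] [AddCommGroup M] [Module R M]
  [LieRingModule L M]

lemma lieInvariant_apply_lie_self [NoZeroDivisors R] [NeZero (2 : R)] {Φ : LinearMap.BilinForm R M}
    (hsymm : ∀ u w, Φ u w = Φ w u) (hinv : Φ.lieInvariant L) (x : L) (m : M) : Φ ⁅x, m⁆ m = 0 := by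
  have h : Φ ⁅x, m⁆ m = -Φ ⁅x, m⁆ m := (hinv x m m).trans (by rw [hsymm])
  have two_mul_eq_zero : 2 * Φ ⁅x, m⁆ m = 0 := by linear_combination h
  exact (mul_eq_zero_iff_left two_ne_zero).mp two_mul_eq_zero

lemma lieInvariant_eq_zero_of_transitive [NoZeroDivisors R] [NeZero (2 : R)]
    {Φ : LinearMap.BilinForm R M} (hsymm : ∀ u w, Φ u w = Φ w u) (hinv : Φ.lieInvariant L)
    (htrans : ∀ m : M, m ≠ 0 → ∀ m' : M, ∃ x : L, ⁅x, m⁆ = m') : Φ = 0 := by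
  refine LinearMap.ext₂ fun m' m ↦ ?_
  rcases eq_or_ne m 0 with rfl | hm
  · simp
  · obtain ⟨x, rfl⟩ := htrans m hm m'
    exact lieInvariant_apply_lie_self hsymm hinv x m

end InvariantForm

lemma exists_sl_lie_eq [Nontrivial n] {v : n → K} (hv : v ≠ 0) (w : n → K) :
    ∃ A : sl n K, ⁅A, v⁆ = w := by
  obtain ⟨i, hi⟩ : ∃ i, v i ≠ 0 := Function.ne_iff.mp hv
  obtain ⟨j, hj⟩ := exists_ne i
  let y : n → K := Pi.single i (v i)⁻¹
  let z : n → K := Pi.single j 1 - (v j / v i) • Pi.single i 1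
  have hyv : y ⬝ᵥ v = 1 := by simp [y, hi]
  have hzv : z ⬝ᵥ v = 0 := by simp [z, hi]
  -- `vecMulVec w y` maps `v` to `w`; the second term kills `v` and makes the trace zero.
  refine ⟨⟨vecMulVec w y - (w ⬝ᵥ y) • vecMulVec (Pi.single j 1) z, ?_⟩, ?_⟩
  · change Matrix.trace _ = 0
    simp [trace_vecMulVec, z, hj]
  · change (vecMulVec w y - (w ⬝ᵥ y) • vecMulVec (Pi.single j 1) z) *ᵥ v = w
    simp [sub_mulVec, smul_mulVec, vecMulVec_mulVec, hyv, hzv]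

lemma sl_lie_dotProductEquiv (A : sl n R) (w : n → R) :
    ⁅A, dotProductEquiv R n w⁆ = dotProductEquiv R n (-(A.1ᵀ *ᵥ w)) := by
  refine LinearMap.ext fun v ↦ ?_
  change -(w ⬝ᵥ A.1 *ᵥ v) = (-(A.1ᵀ *ᵥ w)) ⬝ᵥ v
  rw [dotProduct_mulVec, neg_dotProduct, mulVec_transpose]

lemma exists_sl_lie_dual_eq [Nontrivial n] {q : Dual K (n → K)} (hq : q ≠ 0)
    (q' : Dual K (n → K)) : ∃ A : sl n K, ⁅A, q⁆ = q' := by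
  obtain ⟨w, rfl⟩ := (dotProductEquiv K n).surjective q
  obtain ⟨w', rfl⟩ := (dotProductEquiv K n).surjective q'
  obtain ⟨B, hB⟩ := exists_sl_lie_eq (by rintro rfl; simp at hq : w ≠ 0) w'
  have hB : B.1 *ᵥ w = w' := hB
  have trace_eq_zero : (-B.1ᵀ).trace = 0 := by
    rw [trace_neg, trace_transpose, trace_coe_sl, neg_zero]
  refine ⟨⟨-B.1ᵀ, trace_eq_zero⟩, ?_⟩
  rw [sl_lie_dotProductEquiv, transpose_neg, transpose_transpose, neg_mulVec, hB, neg_neg]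

lemma exists_eq_smul_of_map_sl_lie (T : (n → R) →ₗ⁅R,sl n R⁆ (n → R)) :
    ∃ c : R, ∀ v, T v = c • v := by
  obtain ⟨c, hc⟩ := mem_range_scalar_of_commute_single (M := LinearMap.toMatrix' T.toLinearMap)
    fun i j hij ↦ by
      have comm : Matrix.toLin' (Matrix.single i j 1) ∘ₗ T.toLinearMap =
          T.toLinearMap ∘ₗ Matrix.toLin' (Matrix.single i j 1) :=
        LinearMap.ext fun v ↦ (T.map_lie (single i j hij 1) v).symm
      simpa [commute_iff_eq, LinearMap.toMatrix'_comp] using congrArg LinearMap.toMatrix' comm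
  refine ⟨c, fun v ↦ ?_⟩
  calc T v = LinearMap.toMatrix' T.toLinearMap *ᵥ v :=
        (LinearMap.toMatrix'_mulVec T.toLinearMap v).symm
    _ = c • v := by rw [← hc, scalar_apply, diagonal_const_mulVec]

lemma exists_eq_mul_eval_of_sl_invariant
    (g : (n → R) →ₗ[R] Dual R (n → R) →ₗ[R] R)
    (hg : ∀ (A : sl n R) v q, g ⁅A, v⁆ q = -g v ⁅A, q⁆) :
    ∃ c : R, ∀ v q, g v q = c * q v := by
  let T : (n → R) →ₗ[R] (n → R) := (evalEquiv R (n → R)).symm ∘ₗ g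
  have apply_T (v : n → R) (q : Dual R (n → R)) : q (T v) = g v q := by simp [T]
  have T_lie (A : sl n R) (v : n → R) : T ⁅A, v⁆ = ⁅A, T v⁆ := by
    refine sub_eq_zero.mp ((forall_dual_apply_eq_zero_iff R _).mp fun q ↦ ?_)
    rw [map_sub, apply_T, hg, ← apply_T, Dual.lie_apply]
    simp
  obtain ⟨c, hc⟩ := exists_eq_smul_of_map_sl_lie { T with map_lie' := T_lie _ _ }
  exact ⟨c, fun v q ↦ by rw [← apply_T, show T v = c • v from hc v, map_smul, smul_eq_mul]⟩

lemma exists_eq_mul_pairing_of_sl_invariant [NeZero (2 : K)] [Nontrivial n]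
    {b : LinearMap.BilinForm K ((n → K) × Dual K (n → K))}
    (hsymm : ∀ u w, b u w = b w u)
    (hinv : ∀ (A : sl n K) u w, b (⁅A, u.1⁆, ⁅A, u.2⁆) w = -b u (⁅A, w.1⁆, ⁅A, w.2⁆)) :
    ∃ c : K, ∀ v v' q q', b (v, q) (v', q') = c * (q' v + q v') := by
  have vectors (v v' : n → K) : b (v, 0) (v', 0) = 0 :=
    LinearMap.congr_fun₂ (lieInvariant_eq_zero_of_transitive (L := sl n K)
      (Φ := b.compl₁₂ (.inl K _ _) (.inl K _ _)) (fun _ _ ↦ hsymm _ _)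
      (fun A v v' ↦ by simpa using hinv A (v, 0) (v', 0)) (fun _ ↦ exists_sl_lie_eq)) v v'
  have covectors (q q' : Dual K (n → K)) : b (0, q) (0, q') = 0 :=
    LinearMap.congr_fun₂ (lieInvariant_eq_zero_of_transitive (L := sl n K)
      (Φ := b.compl₁₂ (.inr K _ _) (.inr K _ _)) (fun _ _ ↦ hsymm _ _)
      (fun A q q' ↦ by simpa using hinv A (0, q) (0, q')) (fun _ ↦ exists_sl_lie_dual_eq)) q q'
  obtain ⟨c, hc⟩ := exists_eq_mul_eval_of_sl_invariant (b.compl₁₂ (.inl K _ _) (.inr K _ _))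
    (fun A v q ↦ by simpa using hinv A (v, 0) (0, q))
  have mixed (v : n → K) (q : Dual K (n → K)) : b (v, 0) (0, q) = c * q v := hc v q
  refine ⟨c, fun v v' q q' ↦ ?_⟩
  calc b (v, q) (v', q') = b ((v, 0) + (0, q)) ((v', 0) + (0, q')) := by simp
    _ = b (v, 0) (v', 0) + b (v, 0) (0, q') + (b (v', 0) (0, q) + b (0, q) (0, q')) := by
        simp only [map_add, LinearMap.add_apply, hsymm (0, q) (v', 0)]; ring
    _ = c * (q' v + q v') := by rw [vectors, covectors, mixed, mixed]; ring

lemma lie_single_single {i j k : n} (hij : i ≠ j) (hjk : j ≠ k)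
    (hik : i ≠ k) :
    ⁅single i j hij (1 : R), single j k hjk (1 : R)⁆ = single i k hik 1 := by
  ext : 1
  simp [Ring.lie_def, hik.symm]

lemma lie_single_single_swap {i j : n} (hij : i ≠ j) :
    ⁅single i j hij (1 : R), single j i hij.symm (1 : R)⁆ = singleSubSingle i j 1 := by
  ext : 1
  simp [Ring.lie_def]

lemma lie_singleSubSingle_single {i j : n} (hij : i ≠ j) :
    ⁅singleSubSingle i j (1 : R), single i j hij (1 : R)⁆ = (2 : R) • single i j hij 1 := by
  ext : 1
  simp [Ring.lie_def, sub_mul, mul_sub, hij.symm, ← Matrix.single_add, one_add_one_eq_two]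

lemma lie_singleSubSingle_apply (i j : n) (Z : sl n R) (k l : n) :
    ⁅singleSubSingle i j (1 : R), Z⁆.1 k l =
      ((Pi.single i 1 - Pi.single j 1 : n → R) k - (Pi.single i 1 - Pi.single j 1 : n → R) l)
        * Z.1 k l := by
  have eq_diagonal : (singleSubSingle i j (1 : R)).1 =
      diagonal (Pi.single i 1 - Pi.single j 1) := by
    rw [val_singleSubSingle, ← diagonal_single, ← diagonal_single, diagonal_sub]; rfl
  rw [LieSubalgebra.coe_bracket, eq_diagonal, Ring.lie_def, Matrix.sub_apply, diagonal_mul,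
    mul_diagonal]
  ring

lemma eq_sum_smul_sl (A : sl n R) (o : n) :
    A = ∑ k, ∑ l, A.1 k l • if h : k = l then singleSubSingle k o (1 : R) else single k l h 1 := by
  have coe_ite (k l : n) :
      (if h : k = l then singleSubSingle k o (1 : R) else single k l h 1).1 =
        Matrix.single k l 1 - if k = l then Matrix.single o o 1 else 0 := by
    split_ifs with h
    · rw [h, val_singleSubSingle]
    · simp
  have diagonal_part :
      ∑ k, ∑ l, A.1 k l • (if k = l then Matrix.single o o (1 : R) else 0) = 0 := by
    simp only [smul_ite, smul_zero, Finset.sum_ite_eq, Finset.mem_univ, if_true,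
      ← Finset.sum_smul]
    rw [show ∑ k, A.1 k k = 0 from trace_coe_sl A, zero_smul]
  ext : 1
  simp only [AddSubmonoidClass.coe_finsetSum, SetLike.val_smul, coe_ite, smul_sub,
    Finset.sum_sub_distrib, diagonal_part, sub_zero, Matrix.smul_single, smul_eq_mul, mul_one]
  exact matrix_eq_sum_single A.1

lemma singleSubSingle_mem_of_single_mem {I : LieIdeal R (sl n R)} {i j : n} (hij : i ≠ j)
    (hI : single i j hij (1 : R) ∈ I) : singleSubSingle i j (1 : R) ∈ I :=
  lie_single_single_swap (R := R) hij ▸ lie_mem_left R _ I _ _ hI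

lemma single_swap_mem_of_single_mem (h2 : IsUnit (2 : R)) {I : LieIdeal R (sl n R)} {i j : n}
    (hij : i ≠ j) (hI : single i j hij (1 : R) ∈ I) : single j i hij.symm (1 : R) ∈ I := by
  have neg_singleSubSingle : -singleSubSingle i j (1 : R) = singleSubSingle j i 1 := by
    ext : 1; simp
  have H_mem : singleSubSingle j i (1 : R) ∈ I :=
    neg_singleSubSingle ▸ neg_mem (singleSubSingle_mem_of_single_mem hij hI)
  have two_smul_mem : (2 : R) • single j i hij.symm (1 : R) ∈ I :=
    lie_singleSubSingle_single (R := R) hij.symm ▸ lie_mem_left R _ I _ _ H_mem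
  exact (Submodule.smul_mem_iff_of_isUnit I.toSubmodule h2).mp two_smul_mem

lemma single_mem_of_single_mem (h2 : IsUnit (2 : R)) {I : LieIdeal R (sl n R)} {i j k l : n}
    (hij : i ≠ j) (hkl : k ≠ l) (hI : single i j hij (1 : R) ∈ I) :
    single k l hkl (1 : R) ∈ I := by
  have change_row {i j k : n} (hij : i ≠ j) (hkj : k ≠ j) (hI : single i j hij (1 : R) ∈ I) :
      single k j hkj (1 : R) ∈ I := by
    rcases eq_or_ne k i with rfl | hki
    · exact hI
    · exact lie_single_single (R := R) hki hij hkj ▸ I.lie_mem hI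
  have change_column {i j k : n} (hij : i ≠ j) (hik : i ≠ k) (hI : single i j hij (1 : R) ∈ I) :
      single i k hik (1 : R) ∈ I := by
    rcases eq_or_ne j k with rfl | hjk
    · exact hI
    · exact lie_single_single (R := R) hij hjk hik ▸ lie_mem_left R _ I _ _ hI
  rcases eq_or_ne k j with rfl | hkj
  · exact change_column hij.symm hkl (single_swap_mem_of_single_mem h2 hij hI)
  · exact change_column hkj hkl (change_row hij hkj hI)

lemma lieIdeal_sl_eq_top_of_single_mem (h2 : IsUnit (2 : R)) {I : LieIdeal R (sl n R)} {i j : n}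
    (hij : i ≠ j) (hI : single i j hij (1 : R) ∈ I) : I = ⊤ := by
  refine eq_top_iff.mpr fun A _ ↦ ?_
  rw [eq_sum_smul_sl A i]
  refine sum_mem fun k _ ↦ sum_mem fun l _ ↦ I.smul_mem _ ?_
  split_ifs with hkl
  · rcases eq_or_ne k i with rfl | hki
    · have singleSubSingle_self : singleSubSingle k k (1 : R) = 0 := by ext : 1; simp
      exact singleSubSingle_self ▸ I.zero_mem
    · exact singleSubSingle_mem_of_single_mem hki (single_mem_of_single_mem h2 hij hki hI)
  · exact single_mem_of_single_mem h2 hij hkl hI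

lemma exists_sl_eq_smul_single_add_lie [CharZero K] {i j : n} (hij : i ≠ j) (Y : sl n K) :
    ∃ Z : sl n K,
      Y = Y.1 j i • single j i hij.symm 1 + ((2 : K) • Z + ⁅singleSubSingle i j (1 : K), Z⁆) := by
  let d : n → K := Pi.single i 1 - Pi.single j 1
  have weight_ne (k l : n) (hkl : ¬ (k = j ∧ l = i)) : 2 + (d k - d l) ≠ 0 := by
    by_cases hki : k = i <;> by_cases hkj : k = j <;> by_cases hli : l = i <;>
      by_cases hlj : l = j <;> simp_all [d] <;> norm_num
  let Z : Matrix n n K := .of fun k l ↦ if k = j ∧ l = i then 0 else Y.1 k l / (2 + (d k - d l))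
  have Z_diag (k : n) : Z k k = Y.1 k k / 2 := by
    have : ¬ (k = j ∧ k = i) := fun h ↦ hij (h.2.symm.trans h.1)
    simp [Z, this]
  have trace_Z : Z.trace = 0 := by
    simp only [Matrix.trace, Matrix.diag_apply, Z_diag, ← Finset.sum_div]
    exact div_eq_zero_iff.mpr (.inl (trace_coe_sl Y))
  refine ⟨⟨Z, trace_Z⟩, Subtype.ext (Matrix.ext fun k l ↦ ?_)⟩
  simp only [AddMemClass.coe_add, SetLike.val_smul, Matrix.add_apply, Matrix.smul_apply,
    lie_singleSubSingle_apply, val_single, smul_eq_mul]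
  by_cases hkl : k = j ∧ l = i
  · simp [Z, hkl]
  · have := weight_ne k l hkl
    rw [Matrix.single_apply_of_ne _ _ _ _ _ (by tauto)]
    simp only [Z, Matrix.of_apply, if_neg hkl]
    field_simp
    ring

lemma lieInvariant_sl_apply_single [CharZero K] {Φ : LinearMap.BilinForm K (sl n K)}
    (hΦ : Φ.lieInvariant (sl n K)) {i j : n} (hij : i ≠ j) (Y : sl n K) :
    Φ Y (single i j hij 1) =
      Y.1 j i * Φ (single j i hij.symm 1) (single i j hij 1) := by
  obtain ⟨Z, hZ⟩ := exists_sl_eq_smul_single_add_lie hij Y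
  have lie_eq : Φ ⁅singleSubSingle i j (1 : K), Z⁆ (single i j hij 1) =
      -(2 * Φ Z (single i j hij 1)) := by
    rw [hΦ, lie_singleSubSingle_single, map_smul, smul_eq_mul]
  conv_lhs => rw [hZ]
  simp only [map_add, map_smul, LinearMap.add_apply, LinearMap.smul_apply, smul_eq_mul, lie_eq]
  ring

lemma exists_eq_smul_traceForm_of_lieInvariant [CharZero K] [Nontrivial n]
    {Φ : LinearMap.BilinForm K (sl n K)} (hΦ : Φ.lieInvariant (sl n K)) :
    ∃ c : K, Φ = c • traceForm K (sl n K) (n → K) := by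
  obtain ⟨i, j, hij⟩ := exists_pair_ne n
  let c := Φ (single j i hij.symm 1) (single i j hij 1)
  let Ψ := Φ - c • traceForm K (sl n K) (n → K)
  have hΨ : Ψ.lieInvariant (sl n K) := fun x y z ↦ by
    simp only [Ψ, LinearMap.sub_apply, LinearMap.smul_apply, hΦ x y z,
      traceForm_lieInvariant K (sl n K) (n → K) x y z, smul_neg]
    ring
  have single_mem : single i j hij (1 : K) ∈ InvariantForm.orthogonal Ψ hΨ ⊤ := by
    refine (InvariantForm.mem_orthogonal ..).mpr fun Y _ ↦ ?_
    simp [Ψ, c, lieInvariant_sl_apply_single hΦ hij Y, traceForm_sl_apply, trace_mul_single,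
      mul_comm]
  have orthogonal_eq_top :=
    lieIdeal_sl_eq_top_of_single_mem (isUnit_iff_ne_zero.mpr two_ne_zero) hij single_mem
  refine ⟨c, sub_eq_zero.mp (LinearMap.ext₂ fun X Y ↦ ?_)⟩
  have Y_mem : Y ∈ InvariantForm.orthogonal Ψ hΨ ⊤ := by
    rw [orthogonal_eq_top]; exact LieSubmodule.mem_top Y
  exact (InvariantForm.mem_orthogonal ..).mp Y_mem X (LieSubmodule.mem_top X)

lemma trace_fromBlocks_eq_add {m n R : Type*} [AddCommMonoid R] [Fintype m] [Fintype n]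
    (A : Matrix m m R) (B : Matrix m n R) (C : Matrix n m R) (D : Matrix n n R) :
    (fromBlocks A B C D).trace = A.trace + D.trace := by
  simp [Matrix.trace, Fintype.sum_sum_type]

/-- The element `[[A, v], [q, 0]]` of `sl (n ⊕ Fin 1) R`: the vector `v` fills the last column and
the coordinates of the covector `q` fill the last row. It generalizes `jsl A + Xsl v + Ysl q`,
without reindexing `n ⊕ Fin 1`. -/
def slBlock (A : sl n R) (v : n → R) (q : Dual R (n → R)) : sl (n ⊕ Fin 1) R :=
  ⟨fromBlocks A.1 (replicateCol (Fin 1) v) (replicateRow (Fin 1) ((dotProductEquiv R n).symm q)) 0,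
    show Matrix.trace _ = 0 by
      rw [trace_fromBlocks_eq_add, trace_coe_sl, Matrix.trace_zero, add_zero]⟩

lemma trace_slBlock_mul_slBlock (A A' : sl n R) (v v' : n → R) (q q' : Dual R (n → R)) :
    ((slBlock A v q).1 * (slBlock A' v' q').1).trace = (A.1 * A'.1).trace + (q' v + q v') := by
  obtain ⟨w, rfl⟩ := (dotProductEquiv R n).surjective q
  obtain ⟨w', rfl⟩ := (dotProductEquiv R n).surjective q'
  have trace_col_mul_row (x y : n → R) :
      (replicateCol (Fin 1) x * replicateRow (Fin 1) y).trace = x ⬝ᵥ y := by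
    simp [Matrix.trace, Matrix.mul_apply, dotProduct]
  simp only [slBlock, LinearEquiv.symm_apply_apply, fromBlocks_multiply, trace_fromBlocks_eq_add,
    trace_add, mul_zero, add_zero, trace_mul_comm (replicateRow _ _), trace_col_mul_row,
    dotProductEquiv_apply_apply, dotProduct_comm w, dotProduct_comm w']
  ring

theorem rescaled_forms_eq_killingForm_sl4_general [CharZero K] [Nontrivial n]
    {b₁ : LinearMap.BilinForm K (sl n K)} (hb₁inv : b₁.lieInvariant (sl n K)) (hb₁ : b₁ ≠ 0)
    {b₂ : LinearMap.BilinForm K ((n → K) × Dual K (n → K))}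
    (hb₂symm : ∀ u w, b₂ u w = b₂ w u)
    (hb₂inv : ∀ (A : sl n K) u w, b₂ (⁅A, u.1⁆, ⁅A, u.2⁆) w = -b₂ u (⁅A, w.1⁆, ⁅A, w.2⁆))
    (hb₂ : b₂ ≠ 0) :
    ∃ c₁ c₂ : K, c₁ ≠ 0 ∧ c₂ ≠ 0 ∧ ∀ (A A' : sl n K) (v v' : n → K) (q q' : Dual K (n → K)),
      c₁ * b₁ A A' + c₂ * b₂ (v, q) (v', q') =
        killingForm K (sl (n ⊕ Fin 1) K) (slBlock A v q) (slBlock A' v' q') := by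
  obtain ⟨a, rfl⟩ := exists_eq_smul_traceForm_of_lieInvariant hb₁inv
  obtain ⟨d, hd⟩ := exists_eq_mul_pairing_of_sl_invariant hb₂symm hb₂inv
  have a_ne_zero : a ≠ 0 := by rintro rfl; simp at hb₁
  have d_ne_zero : d ≠ 0 := by
    rintro rfl
    exact hb₂ (LinearMap.ext₂ fun u w ↦ (hd u.1 w.1 u.2 w.2).trans (zero_mul _))
  let N : K := 2 * Fintype.card (n ⊕ Fin 1)
  have N_ne_zero : N ≠ 0 :=
    mul_ne_zero two_ne_zero (Nat.cast_ne_zero.mpr Fintype.card_ne_zero)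
  refine ⟨N / a, N / d, div_ne_zero N_ne_zero a_ne_zero, div_ne_zero N_ne_zero d_ne_zero,
    fun A A' v v' q q' ↦ ?_⟩
  rw [killingForm_sl_apply, trace_slBlock_mul_slBlock, hd, LinearMap.smul_apply,
    LinearMap.smul_apply, traceForm_sl_apply, smul_eq_mul]
  simp only [N]
  field_simp

lemma nontrivial_sl (R n : Type*) [CommRing R] [Nontrivial R] [Fintype n] [DecidableEq n]
    [Nontrivial n] : Nontrivial (sl n R) := by
  obtain ⟨i, j, hij⟩ := exists_pair_ne n
  exact nontrivial_of_ne (single i j hij 1) 0 fun h ↦ by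
    simpa using congr_fun₂ (congrArg Subtype.val h) i j

lemma slAct_coe_eq_lie (A : sl (Fin 3) ℝ) (u : Vmod) : slAct A.1 u = (⁅A, u.1⁆, ⁅A, u.2⁆) :=
  rfl

lemma coe_jsl_add_Xsl_add_Ysl (A : sl (Fin 3) ℝ) (v : Fin 3 → ℝ) (q : Dual ℝ (Fin 3 → ℝ)) :
    (jsl A + Xsl v + Ysl q).1 =
      (slBlock A v q).1.submatrix finSumFinEquiv.symm finSumFinEquiv.symm := by
  have coe_slBlock : (slBlock A v q).1 = fromBlocks A.1 0 0 0 +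
      fromBlocks 0 (of fun i _ ↦ v i) 0 0 + fromBlocks 0 0 (of fun _ j ↦ q (Pi.single j 1)) 0 := by
    simp only [fromBlocks_add, add_zero, zero_add]
    rfl
  rw [coe_slBlock]
  rfl

lemma killingForm_jsl_add_Xsl_add_Ysl (A A' : sl (Fin 3) ℝ) (v v' : Fin 3 → ℝ)
    (q q' : Dual ℝ (Fin 3 → ℝ)) :
    killingForm ℝ (sl (Fin 4) ℝ) (jsl A + Xsl v + Ysl q) (jsl A' + Xsl v' + Ysl q') =
      killingForm ℝ (sl (Fin 3 ⊕ Fin 1) ℝ) (slBlock A v q) (slBlock A' v' q') := by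
  simp only [killingForm_sl_apply, coe_jsl_add_Xsl_add_Ysl, submatrix_mul_equiv,
    trace_submatrix_finSumFinEquiv, Fintype.card_congr (finSumFinEquiv (m := 3) (n := 1))]

end

/-- Any pair of invariant nondegenerate symmetric bilinear forms on `sl(3,ℝ)` and on
`ℝ³ ⊕ (ℝ³)*` can be rescaled so that their sum is the restriction of the Killing form of
`sl(4,ℝ)` under `(A, v, q) ↦ j(A) + X_v + Y_q`. -/
theorem rescaled_forms_eq_killingForm_sl4
    (b₁ : LinearMap.BilinForm ℝ ↥(LieAlgebra.SpecialLinear.sl (Fin 3) ℝ))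
    (hb₁symm : ∀ A A', b₁ A A' = b₁ A' A)
    (hb₁nondeg : ∀ A, (∀ A', b₁ A A' = 0) → A = 0)
    (hb₁inv : ∀ A X Y : LieAlgebra.SpecialLinear.sl (Fin 3) ℝ,
      b₁ ⁅A, X⁆ Y + b₁ X ⁅A, Y⁆ = 0)
    (b₂ : LinearMap.BilinForm ℝ Vmod)
    (hb₂symm : ∀ u w, b₂ u w = b₂ w u)
    (hb₂nondeg : ∀ u, (∀ w, b₂ u w = 0) → u = 0)
    (hb₂inv : ∀ A : M33R, A.trace = 0 →
      ∀ u w : Vmod, b₂ (slAct A u) w + b₂ u (slAct A w) = 0) :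
    ∃ c₁ c₂ : ℝ, c₁ ≠ 0 ∧ c₂ ≠ 0 ∧
      ∀ (A A' : LieAlgebra.SpecialLinear.sl (Fin 3) ℝ)
        (v v' : Fin 3 → ℝ) (q q' : Module.Dual ℝ (Fin 3 → ℝ)),
        c₁ * b₁ A A' + c₂ * b₂ (v, q) (v', q') =
          killingForm ℝ ↥(LieAlgebra.SpecialLinear.sl (Fin 4) ℝ)
            (jsl A + Xsl v + Ysl q) (jsl A' + Xsl v' + Ysl q') := by
  have b₁_lieInvariant : b₁.lieInvariant (LieAlgebra.SpecialLinear.sl (Fin 3) ℝ) :=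
    fun A X Y ↦ eq_neg_of_add_eq_zero_left (hb₁inv A X Y)
  have b₂_invariant (A : LieAlgebra.SpecialLinear.sl (Fin 3) ℝ) (u w : Vmod) :
      b₂ (⁅A, u.1⁆, ⁅A, u.2⁆) w = -b₂ u (⁅A, w.1⁆, ⁅A, w.2⁆) := by
    simpa only [slAct_coe_eq_lie] using
      eq_neg_of_add_eq_zero_left (hb₂inv A.1 (trace_coe_sl A) u w)
  have := nontrivial_sl ℝ (Fin 3)
  have b₁_ne_zero : b₁ ≠ 0 := LinearMap.SeparatingLeft.ne_zero hb₁nondeg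
  have b₂_ne_zero : b₂ ≠ 0 := LinearMap.SeparatingLeft.ne_zero hb₂nondeg
  obtain ⟨c₁, c₂, hc₁, hc₂, rescaled_eq⟩ := rescaled_forms_eq_killingForm_sl4_general
    b₁_lieInvariant b₁_ne_zero hb₂symm b₂_invariant b₂_ne_zero
  refine ⟨c₁, c₂, hc₁, hc₂, fun A A' v v' q q' ↦ ?_⟩
  rw [rescaled_eq, killingForm_jsl_add_Xsl_add_Ysl]
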